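/- arXiv:1410.1103 — 13 statements merged into one kernel-verified Lean document; each statement's English description precedes it below -/
import Mathlib

section
/- For every number of objects m ≥ 1, every pair of rankings σ, σ' of the m objects, and every binary relevance vector r ∈ {0,1}^m, the difference of pairwise losses equals the difference of sum losses: PL(σ,r) − PL(σ',r) = SumLoss(σ,r) − SumLoss(σ',r). (Equivalently, SumLoss(σ,r) − PL(σ,r) is a quantity depending only on r, not on σ.) -/
/-- SumLoss(σ,r) = Σ_i σ(i)·r(i), where the rank of object `i` is `(σ i : ℕ) + 1`
(ranks run from 1 to m) and `r i : Bool` is its binary relevance. -/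
noncomputable def sumLoss {m : ℕ} (σ : Equiv.Perm (Fin m)) (r : Fin m → Bool) : ℝ :=
  ∑ i, (((σ i : ℕ) : ℝ) + 1) * (if r i then 1 else 0)

/-- PairwiseLoss(σ,r) = Σ_i Σ_j 𝟙(σ(i)<σ(j))·𝟙(r(i)<r(j)). -/
noncomputable def pairwiseLoss {m : ℕ} (σ : Equiv.Perm (Fin m)) (r : Fin m → Bool) : ℝ :=
  ∑ i, ∑ j, if σ i < σ j ∧ r i = false ∧ r j = true then (1 : ℝ) else 0

lemma rank_eq_sum {m : ℕ} (σ : Equiv.Perm (Fin m)) (j : Fin m) :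
    ((σ j : ℕ) : ℝ) = ∑ i, if σ i < σ j then (1 : ℝ) else 0 := by
  rw [Equiv.sum_comp σ (fun x => if x < σ j then (1 : ℝ) else 0)]
  rw [Finset.sum_boole]
  have h : Finset.univ.filter (fun x => x < σ j) = Finset.Iio (σ j) := by
    ext x; simp
  rw [h, Fin.card_Iio]

lemma two_mul_pairs {m : ℕ} (σ : Equiv.Perm (Fin m)) (r : Fin m → Bool) :
    2 * (∑ j, ∑ i, if σ i < σ j ∧ r i = true ∧ r j = true then (1 : ℝ) else 0)
      = ∑ j, ∑ i, if i ≠ j ∧ r i = true ∧ r j = true then (1 : ℝ) else 0 := by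
  rw [two_mul]
  nth_rewrite 2 [Finset.sum_comm]
  simp_rw [← Finset.sum_add_distrib]
  refine Finset.sum_congr rfl fun j _ => Finset.sum_congr rfl fun i _ => ?_
  rcases lt_trichotomy (σ i) (σ j) with h | h | h
  · have hne : i ≠ j := by rintro rfl; exact lt_irrefl _ h
    simp [h, h.not_gt, hne]
  · have := σ.injective h
    subst this
    simp
  · have hne : i ≠ j := by rintro rfl; exact lt_irrefl _ h
    simp [h, h.not_gt, hne, and_comm]

lemma sumLoss_eq {m : ℕ} (σ : Equiv.Perm (Fin m)) (r : Fin m → Bool) :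
    sumLoss σ r = pairwiseLoss σ r
      + (∑ j, ∑ i, if σ i < σ j ∧ r i = true ∧ r j = true then (1 : ℝ) else 0)
      + ∑ j, if r j = true then (1 : ℝ) else 0 := by
  unfold sumLoss pairwiseLoss
  nth_rewrite 1 [Finset.sum_comm]
  simp_rw [← Finset.sum_add_distrib]
  refine Finset.sum_congr rfl fun j _ => ?_
  rw [rank_eq_sum, add_mul, one_mul, Finset.sum_mul]
  congr 1
  refine Finset.sum_congr rfl fun i _ => ?_
  cases r i <;> cases r j <;> simp

theorem pl_diff_eq_sumLoss_diff (m : ℕ) (hm : 1 ≤ m)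
    (σ σ' : Equiv.Perm (Fin m)) (r : Fin m → Bool) :
    pairwiseLoss σ r - pairwiseLoss σ' r = sumLoss σ r - sumLoss σ' r := by
  have h1 := sumLoss_eq σ r
  have h2 := sumLoss_eq σ' r
  have h3 := two_mul_pairs σ r
  have h4 := two_mul_pairs σ' r
  linarith
end

section
/- (Global observability for SumLoss.) For every m ≥ 1 and every pair of rankings σ_a, σ_b of m objects, the loss-difference vector, i.e., the function r ↦ SumLoss(σ_a,r) − SumLoss(σ_b,r) on {0,1}^m, lies in the ℝ-linear span of the family {χ_{j,b} : j ∈ {1,…,m}, b ∈ {0,1}}. In fact, for every ranking σ_a the function r ↦ SumLoss(σ_a,r) itself lies in this span, since it equals Σ_{j=1}^m j · χ_{σ_a^{-1}(j),1}. -/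
/-- χ_{j,b}(r) = 𝟙(r(j)=b), a column of a transposed signal matrix under top-1 feedback. -/
noncomputable def chi {m : ℕ} (j : Fin m) (b : Bool) : (Fin m → Bool) → ℝ :=
  fun r => if r j = b then 1 else 0

/-- Global observability for SumLoss: every loss-difference vector lies in the span of the
columns of the transposed signal matrices; in fact each loss vector itself does, since
`r ↦ SumLoss(σ,r)` equals `Σ_{j=1}^m j · χ_{σ⁻¹(j),1}`. -/
theorem sumLoss_global_observability (m : ℕ) (hm : 1 ≤ m) (σa σb : Equiv.Perm (Fin m)) :
    ((fun r => sumLoss σa r - sumLoss σb r) ∈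
        Submodule.span ℝ (Set.range fun p : Fin m × Bool => chi p.1 p.2)) ∧
      (∀ σ : Equiv.Perm (Fin m),
        (fun r => sumLoss σ r) =
            (∑ j : Fin m, (((j : ℕ) : ℝ) + 1) • chi (σ.symm j) true) ∧
          (fun r => sumLoss σ r) ∈
            Submodule.span ℝ (Set.range fun p : Fin m × Bool => chi p.1 p.2)) := by
  have h1 : ∀ σ : Equiv.Perm (Fin m), (fun r => sumLoss σ r) =
      (∑ j : Fin m, (((j : ℕ) : ℝ) + 1) • chi (σ.symm j) true) := by
    intro σ
    funext r
    rw [Finset.sum_apply, ← Equiv.sum_comp σ]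
    simp only [sumLoss, chi, Pi.smul_apply, smul_eq_mul, Equiv.symm_apply_apply]
  have h2 : ∀ σ : Equiv.Perm (Fin m), (fun r => sumLoss σ r) ∈
      Submodule.span ℝ (Set.range fun p : Fin m × Bool => chi p.1 p.2) := by
    intro σ
    rw [h1 σ]
    exact Submodule.sum_mem _ fun j _ => Submodule.smul_mem _ _
      (Submodule.subset_span ⟨(σ.symm j, true), rfl⟩)
  exact ⟨Submodule.sub_mem _ (h2 σa) (h2 σb), fun σ => ⟨h1 σ, h2 σ⟩⟩
end

section
/- (Characterization of optimal actions for SumLoss.) For every m ≥ 1, every distribution p ∈ Δ over {0,1}^m, and every ranking σ of m objects: σ is optimal under p, i.e., Σ_r p(r)·SumLoss(σ,r) ≤ Σ_r p(r)·SumLoss(σ',r) for every ranking σ', if and only if the expected relevances read off in rank order are nonincreasing: E_p[r(σ^{-1}(1))] ≥ E_p[r(σ^{-1}(2))] ≥ … ≥ E_p[r(σ^{-1}(m))]. -/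
/-- Expected SumLoss, with the objects listed in the rank order of `σ`. -/
theorem expected_sumLoss_reindex {m : ℕ} (p : (Fin m → Bool) → ℝ)
    (σ τ : Equiv.Perm (Fin m)) :
    ∑ r, p r * sumLoss τ r =
      ∑ j, (((τ (σ.symm j) : ℕ) : ℝ) + 1) *
        ∑ r, p r * (if r (σ.symm j) then 1 else 0) := by
  rw [Equiv.sum_comp σ.symm (fun i => (((τ i : ℕ) : ℝ) + 1) *
    ∑ r, p r * (if r i then 1 else 0))]
  simp only [sumLoss, Finset.mul_sum]
  rw [Finset.sum_comm]
  refine Finset.sum_congr rfl fun i _ => Finset.sum_congr rfl fun r _ => ?_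
  ring

/-- A ranking σ has minimal expected SumLoss under a distribution p on {0,1}^m iff the
expected relevances read off in rank order (σ⁻¹(1), σ⁻¹(2), …, σ⁻¹(m)) are nonincreasing. -/
theorem sumLoss_optimal_iff_sorted (m : ℕ) (hm : 1 ≤ m)
    (p : (Fin m → Bool) → ℝ) (hp : ∀ r, 0 ≤ p r) (hsum : ∑ r, p r = 1)
    (σ : Equiv.Perm (Fin m)) :
    (∀ σ' : Equiv.Perm (Fin m),
        ∑ r, p r * sumLoss σ r ≤ ∑ r, p r * sumLoss σ' r) ↔
      (∀ j k : Fin m, j ≤ k →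
        (∑ r, p r * (if r (σ.symm k) then 1 else 0)) ≤
          ∑ r, p r * (if r (σ.symm j) then 1 else 0)) := by
  constructor
  · intro h j k hjk
    rcases hjk.eq_or_lt with rfl | hlt
    · exact le_rfl
    have h1 := h (σ.trans (Equiv.swap j k))
    rw [expected_sumLoss_reindex p σ σ, expected_sumLoss_reindex p σ (σ.trans _)] at h1
    simp only [Equiv.trans_apply, Equiv.apply_symm_apply] at h1
    generalize hg : (fun j => ∑ r, p r * (if r (σ.symm j) then (1 : ℝ) else 0)) = g at h1
    have hgj : ∀ j, ∑ r, p r * (if r (σ.symm j) then (1 : ℝ) else 0) = g j :=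
      fun j => congrFun hg j
    simp only [hgj] at h1 ⊢
    rw [← sub_nonneg, ← Finset.sum_sub_distrib,
      Fintype.sum_eq_add j k hlt.ne] at h1
    · rw [Equiv.swap_apply_left, Equiv.swap_apply_right] at h1
      have hc : ((j : ℕ) : ℝ) < ((k : ℕ) : ℝ) := by exact_mod_cast hlt
      by_contra hcon
      push Not at hcon
      nlinarith [mul_pos (sub_pos.2 hc) (sub_pos.2 hcon)]
    · rintro x ⟨hx, hy⟩
      rw [Equiv.swap_apply_of_ne_of_ne hx hy, sub_self]
  · intro h τ
    rw [expected_sumLoss_reindex p σ σ, expected_sumLoss_reindex p σ τ]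
    have hav : Antivary (fun j : Fin m => ((j : ℕ) : ℝ) + 1)
        (fun j => ∑ r, p r * (if r (σ.symm j) then (1 : ℝ) else 0)) := by
      intro i j hij
      have : j ≤ i := by
        by_contra hc
        exact absurd (h i j (not_le.1 hc).le) (not_le.2 hij)
      have h2 : ((j : ℕ) : ℝ) ≤ ((i : ℕ) : ℝ) := by exact_mod_cast this
      simpa using h2
    have := hav.sum_mul_le_sum_comp_perm_mul (σ := σ.symm.trans τ)
    simpa only [Equiv.trans_apply, Equiv.apply_symm_apply] using this
end

section
/- (Every action is Pareto-optimal for SumLoss.) For every m ≥ 1 and every ranking σ of m objects, the cell C_σ is nonempty and is a (2^m − 1)-dimensional polytope: the affine span of C_σ (as a subset of ℝ^{2^m}, functions from {0,1}^m to ℝ) is exactly the affine hyperplane {p : {0,1}^m → ℝ | Σ_r p(r) = 1}. -/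
/-- The cell `C_σ`: distributions in the probability simplex over {0,1}^m under which the
ranking σ has minimal expected SumLoss among all rankings. -/
def cell {m : ℕ} (σ : Equiv.Perm (Fin m)) : Set ((Fin m → Bool) → ℝ) :=
  {p | (∀ r, 0 ≤ p r) ∧ (∑ r, p r = 1) ∧
    ∀ σ' : Equiv.Perm (Fin m), ∑ r, p r * sumLoss σ r ≤ ∑ r, p r * sumLoss σ' r}

lemma sumLoss_eq_one {m : ℕ} (σ : Equiv.Perm (Fin m)) (r : Fin m → Bool) :
    sumLoss σ r = sumLoss 1 (r ∘ σ.symm) := by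
  unfold sumLoss
  rw [← Equiv.sum_comp σ (fun i => ((((1 : Equiv.Perm (Fin m)) i : ℕ) : ℝ) + 1) *
    (if (r ∘ σ.symm) i then 1 else 0))]
  simp

lemma sum_sumLoss_comp {m : ℕ} (σ : Equiv.Perm (Fin m)) (f : ℝ → ℝ) :
    ∑ r, f (sumLoss σ r) = ∑ r, f (sumLoss (1 : Equiv.Perm (Fin m)) r) := by
  simp_rw [sumLoss_eq_one σ]
  exact Equiv.sum_comp (Equiv.arrowCongr σ (Equiv.refl Bool))
    (fun r => f (sumLoss (1 : Equiv.Perm (Fin m)) r))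

lemma sumLoss_nonneg {m : ℕ} (σ : Equiv.Perm (Fin m)) (r : Fin m → Bool) :
    0 ≤ sumLoss σ r := by
  unfold sumLoss
  apply Finset.sum_nonneg
  intro i _
  split_ifs <;> positivity

lemma sumLoss_single {m : ℕ} (σ : Equiv.Perm (Fin m)) (i : Fin m) :
    sumLoss σ (fun j => decide (j = i)) = ((σ i : ℕ) : ℝ) + 1 := by
  simp [sumLoss]

lemma sum_mul_lt {m : ℕ} (σ σ' : Equiv.Perm (Fin m)) (h : σ' ≠ σ) :
    ∑ r, sumLoss σ r * sumLoss σ' r < ∑ r, sumLoss σ r * sumLoss σ r := by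
  have h1 : 0 < ∑ r, (sumLoss σ r - sumLoss σ' r) ^ 2 := by
    obtain ⟨i, hi⟩ : ∃ i, σ' i ≠ σ i := by
      by_contra! hc
      exact h (Equiv.ext hc)
    refine Finset.sum_pos' (fun _ _ => sq_nonneg _)
      ⟨fun j => decide (j = i), Finset.mem_univ _, ?_⟩
    rw [sumLoss_single, sumLoss_single]
    apply sq_pos_of_ne_zero
    intro h0
    apply hi
    apply Fin.ext
    have : ((σ' i : ℕ) : ℝ) = ((σ i : ℕ) : ℝ) := by linarith
    exact_mod_cast this
  have h2 := sum_sumLoss_comp σ (fun x => x * x)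
  have h3 := sum_sumLoss_comp σ' (fun x => x * x)
  have h4 : ∑ r, (sumLoss σ r - sumLoss σ' r) ^ 2 = ∑ r, sumLoss σ r * sumLoss σ r
      + ∑ r, sumLoss σ' r * sumLoss σ' r - 2 * ∑ r, sumLoss σ r * sumLoss σ' r := by
    rw [Finset.mul_sum, ← Finset.sum_add_distrib, ← Finset.sum_sub_distrib]
    exact Finset.sum_congr rfl fun r _ => by ring
  linarith

/-- A strictly interior point of the cell. -/
lemma exists_interior {m : ℕ} (σ : Equiv.Perm (Fin m)) :
    ∃ p : (Fin m → Bool) → ℝ, (∀ r, 0 < p r) ∧ ∑ r, p r = 1 ∧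
      ∀ σ', σ' ≠ σ → ∑ r, p r * sumLoss σ r < ∑ r, p r * sumLoss σ' r := by
  set A : ℝ := 1 + ∑ r, sumLoss σ r with hA
  have hw : ∀ r, 0 < A - sumLoss σ r := fun r => by
    have := Finset.single_le_sum (fun r _ => sumLoss_nonneg σ r) (Finset.mem_univ r)
    linarith
  have hZ : 0 < ∑ r, (A - sumLoss σ r) :=
    Finset.sum_pos (fun r _ => hw r) Finset.univ_nonempty
  set Z := ∑ r, (A - sumLoss σ r) with hZd
  refine ⟨fun r => (A - sumLoss σ r) / Z, fun r => div_pos (hw r) hZ, ?_, ?_⟩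
  · rw [← Finset.sum_div, ← hZd, div_self hZ.ne']
  · intro σ' h
    have key : ∀ τ : Equiv.Perm (Fin m), ∑ r, (A - sumLoss σ r) / Z * sumLoss τ r
        = (A * ∑ r, sumLoss τ r - ∑ r, sumLoss σ r * sumLoss τ r) / Z := by
      intro τ
      rw [Finset.mul_sum, ← Finset.sum_sub_distrib, Finset.sum_div]
      exact Finset.sum_congr rfl fun r _ => by ring
    rw [key, key]
    apply div_lt_div_of_pos_right _ hZ
    have h2 := sum_sumLoss_comp σ (fun x => x)
    have h3 := sum_sumLoss_comp σ' (fun x => x)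
    rw [h2, h3]
    linarith [sum_mul_lt σ σ' h]

/-- Every action is Pareto-optimal for SumLoss: each cell `C_σ` is nonempty and its affine
span is the full hyperplane `{p | Σ_r p(r) = 1}`, i.e. `C_σ` is a `(2^m − 1)`-dimensional
polytope. -/
theorem cell_nonempty_and_affineSpan (m : ℕ) (hm : 1 ≤ m) (σ : Equiv.Perm (Fin m)) :
    (cell σ).Nonempty ∧
      (affineSpan ℝ (cell σ) : Set ((Fin m → Bool) → ℝ)) =
        {p : (Fin m → Bool) → ℝ | ∑ r, p r = 1} := by
  obtain ⟨p, hp, hp1, hps⟩ := exists_interior σ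
  have hpc : p ∈ cell σ := by
    refine ⟨fun r => (hp r).le, hp1, fun σ' => ?_⟩
    by_cases h : σ' = σ
    · rw [h]
    · exact (hps σ' h).le
  refine ⟨⟨p, hpc⟩, Set.Subset.antisymm ?_ ?_⟩
  · let S : AffineSubspace ℝ ((Fin m → Bool) → ℝ) :=
      { carrier := {p | ∑ r, p r = 1}
        smul_vsub_vadd_mem' := by
          intro c a b d ha hb hd
          simp only [Set.mem_ofPred_eq] at ha hb hd ⊢
          simp [Finset.sum_add_distrib, ← Finset.mul_sum, ha, hb, hd] }
    have : affineSpan ℝ (cell σ) ≤ S := affineSpan_le.2 fun x hx => hx.2.1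
    exact this
  · intro q hq
    simp only [Set.mem_ofPred_eq] at hq
    have e1 : ∀ᶠ t : ℝ in nhdsWithin 0 (Set.Ioi 0), ∀ r, 0 < p r + t * (q r - p r) := by
      rw [Filter.eventually_all]
      intro r
      have hc : ContinuousAt (fun t : ℝ => p r + t * (q r - p r)) 0 := by fun_prop
      exact nhdsWithin_le_nhds (hc.eventually (lt_mem_nhds (by simpa using hp r)))
    have e2 : ∀ᶠ t : ℝ in nhdsWithin 0 (Set.Ioi 0), ∀ σ' : Equiv.Perm (Fin m),
        ∑ r, (p r + t * (q r - p r)) * sumLoss σ r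
          ≤ ∑ r, (p r + t * (q r - p r)) * sumLoss σ' r := by
      rw [Filter.eventually_all]
      intro σ'
      by_cases h : σ' = σ
      · rw [h]; simp
      have hc : ContinuousAt (fun t : ℝ => ∑ r, (p r + t * (q r - p r)) * sumLoss σ' r
          - ∑ r, (p r + t * (q r - p r)) * sumLoss σ r) 0 := by fun_prop
      have := hc.eventually (lt_mem_nhds (a := 0) (by simpa using hps σ' h))
      filter_upwards [nhdsWithin_le_nhds this] with t ht
      linarith
    obtain ⟨t, h1, h2, ht⟩ := (e1.and (e2.and self_mem_nhdsWithin)).exists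
    have ht : 0 < t := ht
    have hx : (fun r => p r + t * (q r - p r)) ∈ cell σ := by
      refine ⟨fun r => (h1 r).le, ?_, h2⟩
      rw [Finset.sum_add_distrib, ← Finset.mul_sum, Finset.sum_sub_distrib, hp1, hq]
      ring
    have := AffineMap.lineMap_mem t⁻¹ (subset_affineSpan ℝ _ hpc) (subset_affineSpan ℝ _ hx)
    have hqe : q = (AffineMap.lineMap p fun r => p r + t * (q r - p r)) t⁻¹ := by
     ext r
     simp [AffineMap.lineMap_apply]
     field_simp
     ring
    rw [hqe]
    exact this
end

section
/- (Neighboring action pairs for SumLoss.) Let m ≥ 2 and let σ_i, σ_j be rankings of m objects such that there exist two distinct objects a, b and a rank k ∈ {1,…,m−1} with σ_i(a) = k, σ_i(b) = k+1, σ_j(a) = k+1, σ_j(b) = k, and σ_i(c) = σ_j(c) for every object c ∉ {a,b}. Then C_{σ_i} ∩ C_{σ_j} is a (2^m − 2)-dimensional polytope; precisely, it is nonempty and its affine span (in ℝ^{2^m}) is the codimension-2 affine subspace {p : {0,1}^m → ℝ | Σ_r p(r) = 1 and Σ_r p(r)·r(a) = Σ_r p(r)·r(b)}. In particular σ_i and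 σ_j are neighboring actions. -/
/-- Marginal expected relevance of object `c`. -/
noncomputable def marg {m : ℕ} (p : (Fin m → Bool) → ℝ) (c : Fin m) : ℝ :=
  ∑ r, p r * (if r c then 1 else 0)

lemma loss_eq {m : ℕ} (p : (Fin m → Bool) → ℝ) (σ : Equiv.Perm (Fin m)) :
    ∑ r, p r * sumLoss σ r = ∑ c, (((σ c : ℕ) : ℝ) + 1) * marg p c := by
  unfold sumLoss marg
  simp_rw [Finset.mul_sum]
  rw [Finset.sum_comm]
  refine Finset.sum_congr rfl fun c _ => Finset.sum_congr rfl fun r _ => ?_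
  ring

lemma sum_comb {m : ℕ} (p q u : (Fin m → Bool) → ℝ) (t : ℝ) (f : (Fin m → Bool) → ℝ) :
    ∑ r, (t * (p r - q r) + u r) * f r
      = t * (∑ r, p r * f r - ∑ r, q r * f r) + ∑ r, u r * f r := by
  rw [← Finset.sum_sub_distrib, Finset.mul_sum, ← Finset.sum_add_distrib]
  refine Finset.sum_congr rfl fun r _ => ?_
  ring

lemma mem_cell_of_antivary {m : ℕ} (σ : Equiv.Perm (Fin m)) (p : (Fin m → Bool) → ℝ)
    (h0 : ∀ r, 0 ≤ p r) (h1 : ∑ r, p r = 1)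
    (h : ∀ i j, σ i < σ j → marg p j ≤ marg p i) : p ∈ cell σ := by
  refine ⟨h0, h1, fun σ' => ?_⟩
  rw [loss_eq, loss_eq]
  have hv : Antivary (fun c => ((σ c : ℕ) : ℝ) + 1) (marg p) := by
    intro i j hij
    by_contra hc
    have : σ i < σ j := by
      rw [not_le] at hc
      have : ((σ i : ℕ) : ℝ) < ((σ j : ℕ) : ℝ) := by linarith
      exact_mod_cast this
    exact absurd (h i j this) (not_le.mpr hij)
  have := hv.sum_mul_le_sum_comp_perm_mul (σ := σ'.trans σ.symm)
  simpa using this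

/-- The affine subspace of the statement. -/
def hyper {m : ℕ} (a b : Fin m) : AffineSubspace ℝ ((Fin m → Bool) → ℝ) where
  carrier := {p | (∑ r, p r = 1) ∧
          (∑ r, p r * (if r a then 1 else 0)) = ∑ r, p r * (if r b then 1 else 0)}
  smul_vsub_vadd_mem' := by
    rintro t p q u ⟨hp, hp'⟩ ⟨hq, hq'⟩ ⟨hu, hu'⟩
    have h1 := sum_comb p q u t (fun _ => 1)
    simp only [mul_one] at h1
    constructor
    · simp only [vsub_eq_sub, vadd_eq_add, Pi.add_apply, Pi.smul_apply, Pi.sub_apply, smul_eq_mul]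
      rw [h1, hp, hq, hu]; ring
    · simp only [vsub_eq_sub, vadd_eq_add, Pi.add_apply, Pi.smul_apply, Pi.sub_apply, smul_eq_mul]
      rw [sum_comb, sum_comb, hp', hq', hu']

lemma marg_one {m : ℕ} (c d : Fin m) :
    marg (fun _ => (1 : ℝ)) c = marg (fun _ => (1 : ℝ)) d := by
  unfold marg
  rw [← Equiv.sum_comp (Equiv.arrowCongr (Equiv.swap c d) (Equiv.refl Bool))]
  simp

lemma exists_center {m : ℕ} (v : Fin m → ℝ) (hv : ∀ c, 0 ≤ v c) :
    ∃ q : (Fin m → Bool) → ℝ, (∀ r, 0 < q r) ∧ ∑ r, q r = 1 ∧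
      (∀ c d, v c = v d → marg q c = marg q d) ∧ (∀ c d, v c < v d → marg q c < marg q d) := by
  classical
  let w : (Fin m → Bool) → ℝ := fun r =>
    1 + ∑ c, v c * (if r = (fun d => decide (d = c)) then 1 else 0)
  have hw : ∀ r, 0 < w r := by
    intro r
    have : 0 ≤ ∑ c, v c * (if r = (fun d => decide (d = c)) then (1 : ℝ) else 0) :=
      Finset.sum_nonneg fun c _ => mul_nonneg (hv c) (by split_ifs <;> norm_num)
    simp only [w]; linarith
  have hm : ∀ d, marg w d = marg (fun _ => (1 : ℝ)) d + v d := by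
    intro d
    simp only [marg, w, add_mul, Finset.sum_add_distrib, Finset.sum_mul]
    congr 1
    rw [Finset.sum_comm, Finset.sum_eq_single d]
    · rw [Finset.sum_eq_single (fun e => decide (e = d))]
      · simp
      · intro r _ hr; simp [hr]
      · simp
    · intro c _ hc
      refine Finset.sum_eq_zero fun r _ => ?_
      by_cases hr : r = (fun d => decide (d = c))
      · subst hr; simp [hc.symm]
      · simp [hr]
    · simp
  have hW : 0 < ∑ r, w r := Finset.sum_pos (fun r _ => hw r) Finset.univ_nonempty
  have hq : ∀ c, marg (fun r => w r / ∑ r, w r) c = marg w c / ∑ r, w r := by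
    intro c
    simp only [marg]
    rw [Finset.sum_div]
    refine Finset.sum_congr rfl fun r _ => ?_
    ring
  refine ⟨fun r => w r / ∑ r, w r, fun r => div_pos (hw r) hW, ?_, ?_, ?_⟩
  · rw [← Finset.sum_div, div_self hW.ne']
  · intro c d h
    rw [hq, hq, hm, hm, h, marg_one c d]
  · intro c d h
    rw [hq, hq, hm, hm, marg_one c d]
    gcongr

/-- Neighboring action pairs for SumLoss: if σi and σj agree except that two objects a, b
occupying consecutive ranks are interchanged (a just before b in σi, b just before a in σj),
then `C_{σi} ∩ C_{σj}` is nonempty and its affine span is the codimension-2 affine subspace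
`{p | Σ_r p(r) = 1 and E_p[r(a)] = E_p[r(b)]}`, i.e. it is a `(2^m − 2)`-dimensional
polytope; in particular σi and σj are neighboring actions. -/
theorem neighboring_pair_cell_inter (m : ℕ) (hm : 2 ≤ m)
    (σi σj : Equiv.Perm (Fin m)) (a b : Fin m) (hab : a ≠ b)
    (hconsec : ((σi b : ℕ)) = (σi a : ℕ) + 1)
    (hja : σj a = σi b) (hjb : σj b = σi a)
    (hsame : ∀ c : Fin m, c ≠ a → c ≠ b → σj c = σi c) :
    (cell σi ∩ cell σj).Nonempty ∧
      (affineSpan ℝ (cell σi ∩ cell σj) : Set ((Fin m → Bool) → ℝ)) =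
        {p : (Fin m → Bool) → ℝ | (∑ r, p r = 1) ∧
          (∑ r, p r * (if r a then 1 else 0)) = ∑ r, p r * (if r b then 1 else 0)} := by
  classical
  have hsw : ∀ c, σj c = σi (Equiv.swap a b c) := by
    intro c
    by_cases h1 : c = a
    · subst h1; simpa using hja
    by_cases h2 : c = b
    · subst h2; simpa using hjb
    rw [Equiv.swap_apply_of_ne_of_ne h1 h2, hsame c h1 h2]
  -- equal losses
  have hloss : ∀ p, marg p a = marg p b →
      ∑ r, p r * sumLoss σj r = ∑ r, p r * sumLoss σi r := by
    intro p hp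
    rw [loss_eq, loss_eq, ← Equiv.sum_comp (Equiv.swap a b) (fun c => (((σi c : ℕ) : ℝ) + 1) * marg p c)]
    refine Finset.sum_congr rfl fun c _ => ?_
    rw [hsw]
    congr 1
    by_cases h1 : c = a
    · subst h1; simpa using hp
    by_cases h2 : c = b
    · subst h2; simpa using hp.symm
    rw [Equiv.swap_apply_of_ne_of_ne h1 h2]
  have hconv : ∀ p, ∑ r, p r * sumLoss σi r = ∑ r, p r * sumLoss σj r → marg p a = marg p b := by
    intro p hp
    rw [loss_eq, loss_eq, ← sub_eq_zero, ← Finset.sum_sub_distrib,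
      Finset.sum_eq_add_of_mem a b (Finset.mem_univ _) (Finset.mem_univ _) hab] at hp
    · rw [hja, hjb, hconsec] at hp
      push_cast at hp
      linarith
    · rintro c - ⟨h1, h2⟩
      rw [hsame c h1 h2, sub_self]
  have hmem : ∀ p : (Fin m → Bool) → ℝ, (∀ r, 0 ≤ p r) → ∑ r, p r = 1 → marg p a = marg p b →
      (∀ i j, σi i < σi j → ¬ (i = a ∧ j = b) → marg p j ≤ marg p i) →
      p ∈ cell σi ∩ cell σj := by
    intro p h0 h1 hE h
    have hi : p ∈ cell σi := by
      refine mem_cell_of_antivary σi p h0 h1 fun i j hij => ?_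
      by_cases hc : i = a ∧ j = b
      · rw [hc.1, hc.2, hE]
      · exact h i j hij hc
    refine ⟨hi, h0, h1, fun σ' => ?_⟩
    rw [hloss p hE]
    exact hi.2.2 σ'
  obtain ⟨q, hq0, hq1, hqe, hql⟩ := exists_center
    (fun c : Fin m => (m : ℝ) - ((σi c : ℕ) : ℝ) + if c = b then 1 else 0) (by
      intro c
      have : ((σi c : ℕ) : ℝ) < m := by exact_mod_cast (σi c).2
      split_ifs <;> linarith)
  have hqab : marg q a = marg q b := by
    apply hqe
    simp only [if_neg hab, if_true, hconsec]
    push_cast; ring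
  have hqlt : ∀ i j, σi i < σi j → ¬ (i = a ∧ j = b) → marg q j < marg q i := by
    intro i j hij hn
    apply hql
    have hij' : (σi i : ℕ) < (σi j : ℕ) := hij
    have hineq : ((σi i : ℕ) : ℝ) < ((σi j : ℕ) : ℝ) := by exact_mod_cast hij'
    by_cases hj : j = b
    · subst hj
      have hia : i ≠ a := fun h => hn ⟨h, rfl⟩
      have hne : (σi i : ℕ) ≠ (σi a : ℕ) := fun h => hia (σi.injective (Fin.ext h))
      have hib : i ≠ j := by rintro rfl; exact lt_irrefl _ hij
      have h3 : (σi i : ℕ) + 1 < (σi j : ℕ) := by omega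
      have h4 : ((σi i : ℕ) : ℝ) + 1 < ((σi j : ℕ) : ℝ) := by exact_mod_cast h3
      simp only [if_true, if_neg hib]
      linarith
    · simp only [if_neg hj]
      split_ifs <;> linarith
  have hqmem : q ∈ cell σi ∩ cell σj :=
    hmem q (fun r => (hq0 r).le) hq1 hqab fun i j h1 h2 => (hqlt i j h1 h2).le
  refine ⟨⟨q, hqmem⟩, ?_⟩
  change _ = ((hyper a b : AffineSubspace ℝ _) : Set ((Fin m → Bool) → ℝ))
  apply Set.Subset.antisymm
  · refine affineSpan_le.mpr ?_
    rintro p ⟨hi, hj⟩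
    exact ⟨hi.2.1, hconv p (le_antisymm (hi.2.2 σj) (hj.2.2 σi))⟩
  · intro p hp
    have hp1 : ∑ r, p r = 1 := hp.1
    have hp2 : marg p a = marg p b := hp.2
    let x : ℝ → (Fin m → Bool) → ℝ := fun t r => t * (p r - q r) + q r
    have hxm : ∀ t c, marg (x t) c = t * (marg p c - marg q c) + marg q c := by
      intro t c
      exact sum_comb p q q t _
    have e1 : ∀ᶠ t in nhds (0 : ℝ), ∀ r, 0 < x t r := by
      rw [Filter.eventually_all]
      intro r
      have hc : Continuous fun t : ℝ => x t r := by simp only [x]; fun_prop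
      exact hc.continuousAt.eventually (lt_mem_nhds (by simpa [x] using hq0 r))
    have e2 : ∀ᶠ t in nhds (0 : ℝ), ∀ i j, σi i < σi j → ¬ (i = a ∧ j = b) →
        marg (x t) j < marg (x t) i := by
      simp only [Filter.eventually_all]
      intro i j h1 h2
      have hc : ∀ c, Continuous fun t : ℝ => marg (x t) c := by
        intro c; simp only [hxm]; fun_prop
      exact (hc j).continuousAt.eventually_lt (hc i).continuousAt
        (by simpa [hxm] using hqlt i j h1 h2)
    have e3 := (e1.and e2).filter_mono (nhdsWithin_le_nhds (s := Set.Ioi 0))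
    obtain ⟨t, ⟨ht1, ht2⟩, ht⟩ := (e3.and self_mem_nhdsWithin).exists
    have ht : 0 < t := ht
    have hx : x t ∈ cell σi ∩ cell σj := by
      refine hmem _ (fun r => (ht1 r).le) ?_ ?_ fun i j h1 h2 => (ht2 i j h1 h2).le
      · have h1 := sum_comb p q q t (fun _ => 1)
        simp only [mul_one] at h1
        simp only [x]
        rw [h1, hp1, hq1]; ring
      · rw [hxm, hxm, hp2, hqab]
    have key : p = AffineMap.lineMap q (x t) t⁻¹ := by
      ext r
      simp only [AffineMap.lineMap_apply, vsub_eq_sub, vadd_eq_add, Pi.add_apply, Pi.smul_apply,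
        Pi.sub_apply, smul_eq_mul, x]
      field_simp
      ring
    rw [key]
    exact AffineMap.lineMap_mem _ (subset_affineSpan ℝ _ hqmem) (subset_affineSpan ℝ _ hx)
end

section
/- (Neighborhood action set at m = 3.) Let m = 3, let σ_1 be the identity ranking (σ_1(i) = i) and let σ_2 be the ranking with σ_2(1)=1, σ_2(2)=3, σ_2(3)=2. Then for every ranking σ of the three objects that does not place object 1 at rank 1 (i.e., σ^{-1}(1) ≠ 1), the set C_{σ_1} ∩ C_{σ_2} is not contained in C_σ. Consequently the neighborhood action set of the neighboring pair {σ_1, σ_2} is exactly {σ_1, σ_2}. -/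
/-- Expected loss under a point mass on the relevance vector (1,0,0). -/
theorem pm_loss (σ : Equiv.Perm (Fin 3)) :
    ∑ r : Fin 3 → Bool, (if r = (fun i => decide (i = 0)) then (1 : ℝ) else 0) * sumLoss σ r
      = ((σ 0 : ℕ) : ℝ) + 1 := by
  simp [sumLoss, Fin.sum_univ_three]

theorem pm_mem (σ : Equiv.Perm (Fin 3)) (h : σ 0 = 0) :
    (fun r : Fin 3 → Bool => if r = (fun i => decide (i = 0)) then (1 : ℝ) else 0) ∈ cell σ := by
  refine ⟨fun r => ?_, ?_, fun σ' => ?_⟩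
  · dsimp only
    split_ifs <;> norm_num
  · simp
  · rw [pm_loss, pm_loss, h]
    simp

theorem not_sub (σ : Equiv.Perm (Fin 3)) (h : σ.symm 0 ≠ 0) :
    ¬(cell (1 : Equiv.Perm (Fin 3)) ∩ cell (Equiv.swap 1 2) ⊆ cell σ) := by
  intro hs
  have h1 := (hs ⟨pm_mem 1 rfl, pm_mem (Equiv.swap 1 2) (by decide)⟩).2.2 1
  rw [pm_loss, pm_loss] at h1
  apply h
  rw [Equiv.symm_apply_eq]
  have h2 : ((σ 0 : ℕ) : ℝ) ≤ 0 := by simpa using h1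
  have h3 : (σ 0 : ℕ) ≤ 0 := by exact_mod_cast h2
  apply Fin.ext
  simp only [Fin.val_zero]
  omega

/-- Neighborhood action set at m = 3: for the neighboring pair σ₁ = identity and
σ₂ = (1,3,2) (in Lean, `Equiv.swap 1 2`, with 0-indexed objects), no ranking that fails to
place object 1 (index 0) at the top contains `C_{σ₁} ∩ C_{σ₂}` in its cell; consequently the
neighborhood action set of the pair is exactly {σ₁, σ₂}. -/
theorem neighborhood_action_set_m3 :
    (∀ σ : Equiv.Perm (Fin 3), σ.symm 0 ≠ 0 →
        ¬(cell (1 : Equiv.Perm (Fin 3)) ∩ cell (Equiv.swap 1 2) ⊆ cell σ)) ∧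
      {σ : Equiv.Perm (Fin 3) |
          cell (1 : Equiv.Perm (Fin 3)) ∩ cell (Equiv.swap 1 2) ⊆ cell σ} =
        {1, Equiv.swap 1 2} := by
  refine ⟨not_sub, ?_⟩
  ext σ
  simp only [Set.mem_setOf_eq, Set.mem_insert_iff, Set.mem_singleton_iff]
  constructor
  · intro h
    have h0 : σ.symm 0 = 0 := by
      by_contra hc
      exact not_sub σ hc h
    clear h
    revert σ
    decide
  · rintro (rfl | rfl)
    · exact Set.inter_subset_left
    · exact Set.inter_subset_right
end

section
/- (Local observability fails for DCG at m = 3.) Let m = 3, let σ_1 be the identity ranking and σ_2 the ranking with σ_2(1)=1, σ_2(2)=3, σ_2(3)=2; both place object 1 at the top rank. Define for binary relevance vectors DCG(σ,r) = Σ_{i=1}^3 r(i)/log₂(1+σ(i)). Then the gain-difference function d : {0,1}^3 → ℝ, d(r) = DCG(σ_1,r) − DCG(σ_2,r) = (1/2 − 1/log₂3)·(r(2) − r(3)), does NOT lie in the ℝ-linear span of the two functions r ↦ 𝟙(r(1)=0) and r ↦ 𝟙(r(1)=1). -/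
/-- DCG for binary relevance: DCG(σ,r) = Σ_i r(i)/log₂(1+σ(i)), where the rank of object
`i` is `(σ i : ℕ) + 1`, so `1 + σ(i)` is `(σ i : ℕ) + 2`. -/
noncomputable def dcg {m : ℕ} (σ : Equiv.Perm (Fin m)) (r : Fin m → Bool) : ℝ :=
  ∑ i, (if r i then (1 : ℝ) else 0) / Real.logb 2 (((σ i : ℕ) : ℝ) + 2)

/-- Local observability fails for DCG at m = 3: for the neighboring pair consisting of the
identity ranking σ₁ = (1,2,3) and σ₂ = (1,3,2) (both placing object 1 at the top; in Lean
σ₂ = `Equiv.swap 1 2` with 0-indexed objects), the gain difference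
d(r) = DCG(σ₁,r) − DCG(σ₂,r) does not lie in the span of the two columns
r ↦ 𝟙(r(1)=0), r ↦ 𝟙(r(1)=1) of their common transposed signal matrix. -/
theorem dcg_local_observability_fails :
    (fun r : Fin 3 → Bool => dcg 1 r - dcg (Equiv.swap 1 2) r) ∉
      Submodule.span ℝ
        ({(fun r : Fin 3 → Bool => if r 0 = false then (1 : ℝ) else 0),
          (fun r : Fin 3 → Bool => if r 0 = true then (1 : ℝ) else 0)} :
          Set ((Fin 3 → Bool) → ℝ)) := by
  intro h
  obtain ⟨a, b, hab⟩ := Submodule.mem_span_pair.1 h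
  have h0 := congrFun hab ![false, false, false]
  have h1 := congrFun hab ![false, true, false]
  have e1 : (Equiv.swap (1 : Fin 3) 2) 1 = 2 := by decide
  simp [dcg, Fin.sum_univ_three] at h0
  simp [dcg, Fin.sum_univ_three, h0] at h1
  have h2 : Real.logb 2 (1 + 2) < Real.logb 2 (2 + 2) :=
    Real.logb_lt_logb (by norm_num) (by norm_num) (by norm_num)
  have h3 : (Real.logb 2 (1 + 2))⁻¹ = (Real.logb 2 (2 + 2))⁻¹ := by linarith
  exact h2.ne (inv_injective h3)
end

section
/- (Global observability for DCG with multi-graded relevance.) Let m ≥ 1 and n ≥ 1, and let relevance vectors take values r ∈ {0,1,…,n}^m. Define DCG(σ,r) = Σ_{i=1}^m (2^{r(i)} − 1)/log₂(1+σ(i)). Then for every pair of rankings σ_a, σ_b of m objects, the function r ↦ DCG(σ_a,r) − DCG(σ_b,r) on {0,…,n}^m lies in the ℝ-linear span of the family {χ_{j,v} : j ∈ {1,…,m}, v ∈ {0,…,n}}, where χ_{j,v}(r) = 𝟙(r(j)=v). -/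
/-- DCG for multi-graded relevance r ∈ {0,…,n}^m:
DCG(σ,r) = Σ_i (2^{r(i)} − 1)/log₂(1+σ(i)), where the rank of object `i` is
`(σ i : ℕ) + 1`, so `1 + σ(i)` is `(σ i : ℕ) + 2`. -/
noncomputable def dcgGraded {m n : ℕ} (σ : Equiv.Perm (Fin m)) (r : Fin m → Fin (n + 1)) :
    ℝ :=
  ∑ i, ((2 : ℝ) ^ (r i : ℕ) - 1) / Real.logb 2 (((σ i : ℕ) : ℝ) + 2)

/-- Global observability for DCG with multi-graded relevance: for every pair of rankings,
the gain-difference function r ↦ DCG(σa,r) − DCG(σb,r) on {0,…,n}^m lies in the ℝ-linear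
span of the functions χ_{j,v}(r) = 𝟙(r(j)=v), j ∈ {1,…,m}, v ∈ {0,…,n}. -/
theorem dcg_global_observability (m n : ℕ) (hm : 1 ≤ m) (hn : 1 ≤ n)
    (σa σb : Equiv.Perm (Fin m)) :
    (fun r : Fin m → Fin (n + 1) => dcgGraded σa r - dcgGraded σb r) ∈
      Submodule.span ℝ
        (Set.range fun p : Fin m × Fin (n + 1) =>
          fun r : Fin m → Fin (n + 1) => if r p.1 = p.2 then (1 : ℝ) else 0) := by
  have key : ∀ σ : Equiv.Perm (Fin m), (fun r : Fin m → Fin (n + 1) => dcgGraded σ r) ∈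
      Submodule.span ℝ
        (Set.range fun p : Fin m × Fin (n + 1) =>
          fun r : Fin m → Fin (n + 1) => if r p.1 = p.2 then (1 : ℝ) else 0) := by
    intro σ
    have h : (fun r : Fin m → Fin (n + 1) => dcgGraded σ r) =
        ∑ i : Fin m, ∑ v : Fin (n + 1),
          (((2 : ℝ) ^ (v : ℕ) - 1) / Real.logb 2 (((σ i : ℕ) : ℝ) + 2)) •
            (fun r : Fin m → Fin (n + 1) => if r i = v then (1 : ℝ) else 0) := by
      funext r
      simp [dcgGraded, Finset.sum_apply]
    rw [h]
    exact Submodule.sum_mem _ fun i _ => Submodule.sum_mem _ fun v _ =>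
      Submodule.smul_mem _ _ (Submodule.subset_span ⟨(i, v), rfl⟩)
  exact Submodule.sub_mem _ (key σa) (key σb)
end

section
/- (Global observability fails for NDCG at m = 3.) Let m = 3, let σ_1 be the identity ranking and σ_6 the reversal ranking (σ_6(i) = 4 − i). Then the gain-difference function d : {0,1}^3 → ℝ, d(r) = NDCG(σ_1,r) − NDCG(σ_6,r), does NOT lie in the ℝ-linear span of the family {χ_{j,b} : j ∈ {1,2,3}, b ∈ {0,1}}, where χ_{j,b}(r) = 𝟙(r(j)=b). (Explicitly, d takes the value −1/2 at r=(0,0,1), −log₂3/(2(1+log₂3)) at r=(0,1,1), 1/2 at r=(1,0,0), log₂3/(2(1+log₂3)) at r=(1,1,0), and 0 at the other four relevance vectors.) -/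
/-- The NDCG normalizing factor Z(r) = max_σ DCG(σ,r). -/
noncomputable def Zfac {m : ℕ} (r : Fin m → Bool) : ℝ :=
  Finset.univ.sup' Finset.univ_nonempty (fun σ : Equiv.Perm (Fin m) => dcg σ r)

/-- NDCG(σ,r) = DCG(σ,r)/Z(r) for r ≠ 0, with NDCG(σ,0) = 1 by convention. -/
noncomputable def ndcg {m : ℕ} (σ : Equiv.Perm (Fin m)) (r : Fin m → Bool) : ℝ :=
  if r = fun _ => false then 1 else dcg σ r / Zfac r

theorem logb_three_pos : 0 < Real.logb 2 3 := Real.logb_pos (by norm_num) (by norm_num)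

theorem logb_four : Real.logb 2 4 = 2 := by
  rw [show (4 : ℝ) = 2 ^ (2 : ℝ) by norm_num]
  exact Real.logb_rpow (by norm_num) (by norm_num)

theorem logb_two : Real.logb 2 2 = 1 := Real.logb_self_eq_one (by norm_num)

theorem Z100 : Zfac ![true, false, false] = 1 := by
  apply le_antisymm
  · apply Finset.sup'_le
    intro σ _
    simp only [dcg, Fin.sum_univ_three]
    simp
    apply inv_le_one_of_one_le₀
    rw [Real.le_logb_iff_rpow_le (by norm_num) (by positivity)]
    simp
  · have h := Finset.le_sup' (fun σ : Equiv.Perm (Fin 3) => dcg σ ![true, false, false])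
      (Finset.mem_univ 1)
    refine le_trans (le_of_eq ?_) h
    simp [dcg, Fin.sum_univ_three]

theorem Z110 : 1 < Zfac ![true, true, false] := by
  have h := Finset.le_sup' (fun σ : Equiv.Perm (Fin 3) => dcg σ ![true, true, false])
      (Finset.mem_univ 1)
  refine lt_of_lt_of_le ?_ h
  have h3 := inv_pos.2 logb_three_pos
  simp [dcg, Fin.sum_univ_three]
  norm_num
  exact logb_three_pos

theorem ndcg_global_observability_fails :
    (fun r : Fin 3 → Bool => ndcg 1 r - ndcg Fin.revPerm r) ∉
      Submodule.span ℝ (Set.range fun p : Fin 3 × Bool => chi p.1 p.2) := by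
  intro hmem
  have key : ∀ f ∈ Submodule.span ℝ (Set.range fun p : Fin 3 × Bool => chi p.1 p.2),
      f ![true, true, false] + f (fun _ => false)
        = f ![true, false, false] + f ![false, true, false] := by
    intro f hf
    induction hf using Submodule.span_induction with
    | mem x hx =>
      obtain ⟨⟨j, b⟩, rfl⟩ := hx
      fin_cases j <;> cases b <;> simp [chi]
    | zero => simp
    | add x y _ _ hx hy => simp only [Pi.add_apply]; linarith
    | smul a x _ hx => simp only [Pi.smul_apply, smul_eq_mul]; rw [← mul_add, ← mul_add, hx]
  have h := key _ hmem
  have n1 : (![true, true, false] : Fin 3 → Bool) ≠ fun _ => false := by decide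
  have n2 : (![true, false, false] : Fin 3 → Bool) ≠ fun _ => false := by decide
  have n3 : (![false, true, false] : Fin 3 → Bool) ≠ fun _ => false := by decide
  have e0 : (1 : ℝ) + 2 = 3 := by norm_num
  have e1 : (2 : ℝ) + 2 = 4 := by norm_num
  have d1 : dcg 1 ![true, true, false] - dcg Fin.revPerm ![true, true, false] = 1 / 2 := by
    simp [dcg, Fin.sum_univ_three, Fin.rev, e0, e1, logb_four]; ring
  have d2 : dcg 1 ![true, false, false] - dcg Fin.revPerm ![true, false, false] = 1 / 2 := by
    simp [dcg, Fin.sum_univ_three, Fin.rev, e0, e1, logb_four]; norm_num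
  have d3 : dcg 1 ![false, true, false] - dcg Fin.revPerm ![false, true, false] = 0 := by
    simp [dcg, Fin.sum_univ_three, Fin.rev]
  simp only [ndcg, if_neg n1, if_neg n2, if_neg n3, if_true, ← sub_div, d1, d2, d3, Z100] at h
  have hz := Z110
  have : (1 / 2 : ℝ) / Zfac ![true, true, false] < 1 / 2 := div_lt_self (by norm_num) hz
  norm_num at h this
  linarith
end

section
/- (Global observability fails for MAP at m = 3.) Let m = 3, let σ_1 be the identity ranking and σ_6 the reversal ranking (σ_6(i) = 4 − i). Then the gain-difference function d : {0,1}^3 → ℝ, d(r) = MAP(σ_1,r) − MAP(σ_6,r), does NOT lie in the ℝ-linear span of the family {χ_{j,b} : j ∈ {1,2,3}, b ∈ {0,1}}, where χ_{j,b}(r) = 𝟙(r(j)=b). (Explicitly, d takes the value −2/3 at r=(0,0,1), −5/12 at r=(0,1,1), 2/3 at r=(1,0,0), 5/12 at r=(1,1,0), and 0 at the other four relevance vectors.) -/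
/-- MAP(σ,r) = (1/‖r‖₁)·Σ_{i=1}^m [(Σ_{j≤i} 𝟙(r(σ⁻¹(j))=1))/i]·𝟙(r(σ⁻¹(i))=1) for r ≠ 0,
with MAP(σ,0) = 1 by convention. Ranks are 0-indexed in Lean: the object at rank `i` is
`σ.symm i` and the division is by the 1-indexed rank `(i : ℕ) + 1`. -/
noncomputable def mapGain {m : ℕ} (σ : Equiv.Perm (Fin m)) (r : Fin m → Bool) : ℝ :=
  if r = fun _ => false then 1
  else
    (∑ i, if r i then (1 : ℝ) else 0)⁻¹ *
      ∑ i : Fin m,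
        ((∑ j : Fin m, if j ≤ i ∧ r (σ.symm j) = true then (1 : ℝ) else 0) /
            (((i : ℕ) : ℝ) + 1)) *
          (if r (σ.symm i) then 1 else 0)

/-- Global observability fails for MAP at m = 3: the gain difference between the identity
ranking σ₁ and the reversal ranking σ₆ (σ₆(i) = 4 − i, in Lean `Fin.revPerm`) does not lie
in the span of the columns χ_{j,b} of the transposed signal matrices. -/
theorem map_global_observability_fails :
    (fun r : Fin 3 → Bool => mapGain 1 r - mapGain Fin.revPerm r) ∉
      Submodule.span ℝ (Set.range fun p : Fin 3 × Bool => chi p.1 p.2) := by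
  intro h
  -- every element of the span is additive over coordinates
  have key : ∀ f ∈ Submodule.span ℝ (Set.range fun p : Fin 3 × Bool => chi p.1 p.2),
      f ![false, false, true] + f ![false, true, false]
        = f ![false, true, true] + f ![false, false, false] := by
    intro f hf
    induction hf using Submodule.span_induction with
    | mem x hx =>
      obtain ⟨⟨j, b⟩, rfl⟩ := hx
      fin_cases j <;> cases b <;> simp [chi]
    | zero => simp
    | add x y _ _ hx hy =>
      simp only [Pi.add_apply]
      linarith
    | smul a x _ hx =>
      simp only [Pi.smul_apply, smul_eq_mul]
      linear_combination a * hx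
  have hk := key _ h
  have e0 : (![false, false, false] : Fin 3 → Bool) = fun _ => false := by decide
  have e1 : (![false, false, true] : Fin 3 → Bool) ≠ fun _ => false := by decide
  have e2 : (![false, true, false] : Fin 3 → Bool) ≠ fun _ => false := by decide
  have e3 : (![false, true, true] : Fin 3 → Bool) ≠ fun _ => false := by decide
  have r0 : Fin.rev (0 : Fin 3) = 2 := by decide
  have r1 : Fin.rev (1 : Fin 3) = 1 := by decide
  have r2 : Fin.rev (2 : Fin 3) = 0 := by decide
  have s1 : (1 : Equiv.Perm (Fin 3)).symm = 1 := rfl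
  have l1 : ¬ ((2 : Fin 3) ≤ 1) := by decide
  have l2 : (1 : Fin 3) ≤ 2 := by decide
  simp only [mapGain, if_pos e0, if_neg e1, if_neg e2, if_neg e3] at hk
  simp only [Fin.sum_univ_three] at hk
  simp [r0, r1, r2, s1, l1, l2] at hk
  norm_num at hk
end

section
/- (Global observability fails for AUC at m = 4.) Let m = 4, let σ_1 be the identity ranking and σ_{24} the reversal ranking (σ_{24}(i) = 5 − i). Then the loss-difference function d : {0,1}^4 → ℝ, d(r) = AUC(σ_1,r) − AUC(σ_{24},r), does NOT lie in the ℝ-linear span of the family {χ_{j,b} : j ∈ {1,2,3,4}, b ∈ {0,1}}, where χ_{j,b}(r) = 𝟙(r(j)=b). -/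
/-- The AUC normalizing factor N(r) = (Σ_i r(i))·(m − Σ_i r(i)). -/
noncomputable def Nfac {m : ℕ} (r : Fin m → Bool) : ℝ :=
  (∑ i, if r i then (1 : ℝ) else 0) * ((m : ℝ) - ∑ i, if r i then (1 : ℝ) else 0)

/-- AUC(σ,r) = PL(σ,r)/N(r) when N(r) ≠ 0, and 0 by convention when N(r) = 0. -/
noncomputable def auc {m : ℕ} (σ : Equiv.Perm (Fin m)) (r : Fin m → Bool) : ℝ :=
  if Nfac r = 0 then 0 else pairwiseLoss σ r / Nfac r

/-- Global observability fails for AUC at m = 4: the loss difference between the identity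
ranking σ₁ and the reversal ranking σ₂₄ (σ₂₄(i) = 5 − i, in Lean `Fin.revPerm`) does not
lie in the span of the columns χ_{j,b} of the transposed signal matrices. -/
theorem auc_global_observability_fails_m4 :
    (fun r : Fin 4 → Bool => auc 1 r - auc Fin.revPerm r) ∉
      Submodule.span ℝ (Set.range fun p : Fin 4 × Bool => chi p.1 p.2) := by
  intro h
  have key : ∀ f ∈ Submodule.span ℝ (Set.range fun p : Fin 4 × Bool => chi p.1 p.2),
      f ![false, false, true, true] + f ![false, false, false, false]
        = f ![false, false, true, false] + f ![false, false, false, true] := by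
    intro f hf
    induction hf using Submodule.span_induction with
    | mem x hx =>
      obtain ⟨⟨j, b⟩, rfl⟩ := hx
      fin_cases j <;> cases b <;> simp [chi]
    | zero => simp
    | add x y _ _ hx hy => simp only [Pi.add_apply]; linarith
    | smul a x _ hx =>
      simp only [Pi.smul_apply, smul_eq_mul]
      rw [← mul_add, ← mul_add, hx]
  have h2 := key _ h
  simp only [auc, Nfac, pairwiseLoss, Fin.sum_univ_four, Fin.revPerm_apply, Fin.rev_lt_rev,
    Equiv.Perm.one_apply] at h2
  simp at h2
  norm_num at h2
end

section
/- (Global observability holds for AUC at m = 3.) Let m = 3. For every pair of rankings σ_a, σ_b of the three objects, the loss-difference function r ↦ AUC(σ_a,r) − AUC(σ_b,r) on {0,1}^3 lies in the ℝ-linear span of the family {χ_{j,b} : j ∈ {1,2,3}, b ∈ {0,1}}, where χ_{j,b}(r) = 𝟙(r(j)=b). (This holds because for m = 3 the normalizing factors N(r) agree for all relevance vectors with a nontrivial mixture of 0's and 1's.) -/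
/-- Closed form of AUC for three objects. -/
theorem auc_three (σ : Equiv.Perm (Fin 3)) (r : Fin 3 → Bool) :
    auc σ r = (1 / 2 : ℝ) * ((((σ 0 : Fin 3) : ℕ) : ℝ) * chi 0 true r
      + (((σ 1 : Fin 3) : ℕ) : ℝ) * chi 1 true r + (((σ 2 : Fin 3) : ℕ) : ℝ) * chi 2 true r
      - chi 0 true r * chi 1 true r - chi 0 true r * chi 2 true r
      - chi 1 true r * chi 2 true r) := by
  have h01 : σ 0 ≠ σ 1 := fun h => absurd (σ.injective h) (by decide)
  have h02 : σ 0 ≠ σ 2 := fun h => absurd (σ.injective h) (by decide)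
  have h12 : σ 1 ≠ σ 2 := fun h => absurd (σ.injective h) (by decide)
  unfold auc pairwiseLoss Nfac chi
  simp only [Fin.sum_univ_three, Fin.lt_def]
  generalize σ 0 = x at *
  generalize σ 1 = y at *
  generalize σ 2 = z at *
  generalize r 0 = a
  generalize r 1 = b
  generalize r 2 = c
  fin_cases x <;> fin_cases y <;> first | exact absurd rfl h01 | skip
  all_goals fin_cases z <;> first | exact absurd rfl h02 | exact absurd rfl h12 | skip
  all_goals cases a <;> cases b <;> cases c <;> norm_num

/-- Global observability holds for AUC at m = 3: for every pair of rankings of the three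
objects, the loss-difference function lies in the span of the columns χ_{j,b} of the
transposed signal matrices. -/
theorem auc_global_observability_m3 (σa σb : Equiv.Perm (Fin 3)) :
    (fun r : Fin 3 → Bool => auc σa r - auc σb r) ∈
      Submodule.span ℝ (Set.range fun p : Fin 3 × Bool => chi p.1 p.2) := by
  have key : (fun r : Fin 3 → Bool => auc σa r - auc σb r) =
      ∑ j : Fin 3, (((((σa j : Fin 3) : ℕ) : ℝ) - (((σb j : Fin 3) : ℕ) : ℝ)) / 2) •
        chi j true := by
    funext r
    simp only [auc_three, Fin.sum_univ_three, Pi.add_apply, Pi.smul_apply, smul_eq_mul]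
    ring
  rw [key]
  exact Submodule.sum_mem _ fun j _ =>
    Submodule.smul_mem _ _ (Submodule.subset_span ⟨(j, true), rfl⟩)
end

section
/- (AUC is not of the form f(σ)·r.) For every m ≥ 2, there is no function f assigning to each ranking σ of m objects a vector f(σ) ∈ ℝ^m such that AUC(σ,r) = Σ_{i=1}^m f(σ)(i)·r(i) for all rankings σ and all binary relevance vectors r ∈ {0,1}^m. -/
/-- AUC is not of the form f(σ)·r: for m ≥ 2 there is no assignment of a vector
`f σ ∈ ℝ^m` to each ranking σ with AUC(σ,r) = Σ_i f(σ)(i)·r(i) for all σ and all binary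
relevance vectors r. -/
theorem auc_not_linear (m : ℕ) (hm : 2 ≤ m) :
    ¬∃ f : Equiv.Perm (Fin m) → (Fin m → ℝ),
      ∀ (σ : Equiv.Perm (Fin m)) (r : Fin m → Bool),
        auc σ r = ∑ i, f σ i * (if r i then 1 else 0) := by
  rintro ⟨f, hf⟩
  have hm' : (2 : ℝ) ≤ m := by exact_mod_cast hm
  have hN : ∀ k : Fin m, Nfac (fun i => decide (i = k)) = (m : ℝ) - 1 := by
    intro k
    simp [Nfac]
  have hk : ∀ k : Fin m, f 1 k = pairwiseLoss 1 (fun i => decide (i = k)) / ((m : ℝ) - 1) := by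
    intro k
    have h := hf 1 (fun i => decide (i = k))
    rw [auc, hN k, if_neg (by linarith)] at h
    rw [h]
    simp
  have hPL : ∀ (r : Fin m → Bool), 0 ≤ pairwiseLoss 1 r := by
    intro r
    unfold pairwiseLoss
    refine Finset.sum_nonneg fun i _ => Finset.sum_nonneg fun j _ => ?_
    split_ifs <;> norm_num
  have hall : ∑ i, f 1 i = 0 := by
    have h := hf 1 (fun _ => true)
    rw [auc, if_pos (by simp [Nfac])] at h
    simpa using h.symm
  have hnn : ∀ i ∈ Finset.univ, 0 ≤ f 1 i := by
    intro i _
    rw [hk i]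
    exact div_nonneg (hPL _) (by linarith)
  let a : Fin m := ⟨0, by omega⟩
  let b : Fin m := ⟨1, by omega⟩
  have hab : a < b := by simp [a, b, Fin.lt_def]
  have h0 := (Finset.sum_eq_zero_iff_of_nonneg hnn).1 hall b (Finset.mem_univ b)
  have hpos : 0 < pairwiseLoss 1 (fun i => decide (i = b)) := by
    unfold pairwiseLoss
    have hin : ∀ i j : Fin m, (0 : ℝ) ≤ if (1 : Equiv.Perm (Fin m)) i < (1 : Equiv.Perm (Fin m)) j ∧
        decide (i = b) = false ∧ decide (j = b) = true then (1 : ℝ) else 0 := by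
      intro i j
      split_ifs <;> norm_num
    refine Finset.sum_pos' (fun i _ => Finset.sum_nonneg fun j _ => hin i j)
      ⟨a, Finset.mem_univ a, ?_⟩
    refine Finset.sum_pos' (fun j _ => hin a j) ⟨b, Finset.mem_univ b, ?_⟩
    rw [if_pos ⟨by simpa using hab, by simpa using hab.ne, by simp⟩]
    norm_num
  rw [hk b] at h0
  have := div_pos hpos (show (0 : ℝ) < (m : ℝ) - 1 by linarith)
  linarith
end
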